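/- arXiv:1702.00709 — 3 statements merged into one kernel-verified Lean document; each statement's English description precedes it below -/
import Mathlib

section
/- Consider the IQN setup and iteration, and assume additionally x^t ≠ x* for all t. There exist positive constants ε and δ such that: if ‖x⁰ − x*‖ < ε and ‖B_i⁰ − ∇²f_i(x*)‖_{M_i} < δ for M_i = ∇²f_i(x*)^{−1/2} and every i = 1,…,n, then there exists a strictly increasing sequence of indices (t_k)_{k≥0} such that lim_{k→∞} ‖x^{t_{k+1}} − x*‖ / ‖x^{t_k} − x*‖ = 0; i.e., some subsequence of the residuals ‖x^t − x*‖ converges to zero superlinearly. -/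
open Matrix Filter RealInnerProductSpace

noncomputable section

abbrev Vec (p : ℕ) := EuclideanSpace ℝ (Fin p)
abbrev Mat (p : ℕ) := Matrix (Fin p) (Fin p) ℝ

/-- A matrix acting on Euclidean space as a linear map. -/
def applyM {p : ℕ} (A : Mat p) (v : Vec p) : Vec p := Matrix.toEuclideanCLM (𝕜 := ℝ) A v

/-- Operator norm of a matrix induced by the Euclidean vector norm. -/
def opNorm {p : ℕ} (A : Mat p) : ℝ := ‖Matrix.toEuclideanCLM (𝕜 := ℝ) A‖

/-- Frobenius norm of a matrix. -/
def frobNorm {p : ℕ} (A : Mat p) : ℝ := Real.sqrt (∑ i, ∑ j, (A i j)^2)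

/-- Weighted matrix norm ‖A‖_M = ‖M A M‖_F. -/
def wNorm {p : ℕ} (M A : Mat p) : ℝ := frobNorm (M * A * M)

/-- Underlying function of a Euclidean vector. -/
def toFn {p : ℕ} (v : Vec p) : Fin p → ℝ := (WithLp.equiv 2 (Fin p → ℝ)) v

/-- Outer product a bᵀ. -/
def outer {p : ℕ} (a b : Vec p) : Mat p := Matrix.vecMulVec (toFn a) (toFn b)

/-- Bilinear form uᵀ B v. -/
def quadForm {p : ℕ} (B : Mat p) (u v : Vec p) : ℝ := toFn u ⬝ᵥ B.mulVec (toFn v)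

/-- Dot product aᵀ b. -/
def dotV {p : ℕ} (a b : Vec p) : ℝ := toFn a ⬝ᵥ toFn b

/-- The BFGS update  B⁺ = B + yyᵀ/(yᵀs) − B s sᵀ B/(sᵀ B s). -/
def bfgsUpdate {p : ℕ} (B : Mat p) (s y : Vec p) : Mat p :=
  B + (dotV y s)⁻¹ • outer y y - (quadForm B s s)⁻¹ • (B * outer s s * B)

/-- `H` is the Hessian (matrix of second derivatives) of `g`. -/
def HasHessian {p : ℕ} (g : Vec p → ℝ) (H : Vec p → Mat p) : Prop :=
  ∀ x, HasFDerivAt (gradient g) (Matrix.toEuclideanCLM (𝕜 := ℝ) (H x) : Vec p →L[ℝ] Vec p) x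

/-- The cyclic index `i_t = (t mod n) + 1` (0-indexed: `t mod n`). -/
def cyc {n : ℕ} (hn : 1 ≤ n) (t : ℕ) : Fin n := ⟨t % n, Nat.mod_lt t hn⟩

/-- The IQN problem data: `n` twice continuously differentiable sample functions
`f i : ℝ^p → ℝ`, `μ`-strongly convex with `L`-Lipschitz gradients and `L̃`-Lipschitz
Hessians, and the optimizer `x*` of `f = (1/n) Σ f i`. -/
structure IQNProblem (p n : ℕ) where
  hp : 1 ≤ p
  hn : 1 ≤ n
  f : Fin n → Vec p → ℝ
  Hess : Fin n → Vec p → Mat p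
  mu : ℝ
  Lg : ℝ
  Ltil : ℝ
  xstar : Vec p
  hmu : 0 < mu
  hmuL : mu ≤ Lg
  hLtil : 0 < Ltil
  hC2 : ∀ i, ContDiff ℝ 2 (f i)
  hHess : ∀ i, HasHessian (f i) (Hess i)
  hlow : ∀ i, ∀ x xh : Vec p,
    mu * ‖x - xh‖^2 ≤ ⟪gradient (f i) x - gradient (f i) xh, x - xh⟫
  hup : ∀ i, ∀ x xh : Vec p,
    ⟪gradient (f i) x - gradient (f i) xh, x - xh⟫ ≤ Lg * ‖x - xh‖^2
  hLip : ∀ i, ∀ u v : Vec p, opNorm (Hess i u - Hess i v) ≤ Ltil * ‖u - v‖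
  hopt : gradient (fun x => (n : ℝ)⁻¹ * ∑ i, f i x) xstar = 0
  hmin : ∀ x : Vec p, (n : ℝ)⁻¹ * ∑ i, f i xstar ≤ (n : ℝ)⁻¹ * ∑ i, f i x

/-- A run of the IQN iteration: sequences `x^t`, `z_i^t` and symmetric matrices `B_i^t`
following the IQN update with cyclic index, all steps assumed well defined. -/
structure IQNState {p n : ℕ} (P : IQNProblem p n) where
  x : ℕ → Vec p
  z : Fin n → ℕ → Vec p
  B : Fin n → ℕ → Mat p
  hz0 : ∀ i, z i 0 = x 0
  hsym : ∀ i t, (B i t).IsSymm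
  hinv : ∀ t, IsUnit ((n : ℝ)⁻¹ • ∑ i, B i t)
  hx : ∀ t, x (t+1) = applyM ((n : ℝ)⁻¹ • ∑ i, B i t)⁻¹
      ((n : ℝ)⁻¹ • ∑ i, applyM (B i t) (z i t) - (n : ℝ)⁻¹ • ∑ i, gradient (P.f i) (z i t))
  hzupd : ∀ t, z (cyc P.hn t) (t+1) = x (t+1)
  hzfix : ∀ t, ∀ j, j ≠ cyc P.hn t → z j (t+1) = z j t
  hs : ∀ t, z (cyc P.hn t) (t+1) - z (cyc P.hn t) t ≠ 0
  hys : ∀ t, dotV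
      (gradient (P.f (cyc P.hn t)) (z (cyc P.hn t) (t+1)) -
        gradient (P.f (cyc P.hn t)) (z (cyc P.hn t) t))
      (z (cyc P.hn t) (t+1) - z (cyc P.hn t) t) ≠ 0
  hsBs : ∀ t, quadForm (B (cyc P.hn t) t)
      (z (cyc P.hn t) (t+1) - z (cyc P.hn t) t)
      (z (cyc P.hn t) (t+1) - z (cyc P.hn t) t) ≠ 0
  hBupd : ∀ t, B (cyc P.hn t) (t+1) = bfgsUpdate (B (cyc P.hn t) t)
      (z (cyc P.hn t) (t+1) - z (cyc P.hn t) t)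
      (gradient (P.f (cyc P.hn t)) (z (cyc P.hn t) (t+1)) -
        gradient (P.f (cyc P.hn t)) (z (cyc P.hn t) t))
  hBfix : ∀ t, ∀ j, j ≠ cyc P.hn t → B j (t+1) = B j t

section helpers
variable {p : ℕ}

lemma applyM_ofLp (A : Mat p) (v : Vec p) : (applyM A v).ofLp = A *ᵥ v.ofLp := by
  simp [applyM]

lemma applyM_mul (A B : Mat p) (v : Vec p) : applyM (A * B) v = applyM A (applyM B v) := by
  simp [applyM]

lemma applyM_one (v : Vec p) : applyM (1 : Mat p) v = v := by
  simp [applyM]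

lemma applyM_add (A B : Mat p) (v : Vec p) : applyM (A + B) v = applyM A v + applyM B v := by
  simp [applyM]

lemma applyM_sub (A B : Mat p) (v : Vec p) : applyM (A - B) v = applyM A v - applyM B v := by
  simp [applyM]

lemma applyM_smul (c : ℝ) (A : Mat p) (v : Vec p) : applyM (c • A) v = c • applyM A v := by
  simp [applyM]

lemma applyM_sum {n : ℕ} (A : Fin n → Mat p) (v : Vec p) :
    applyM (∑ i, A i) v = ∑ i, applyM (A i) v := by
  simp [applyM, map_sum]

lemma applyM_vsub (A : Mat p) (u v : Vec p) : applyM A (u - v) = applyM A u - applyM A v := by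
  simp [applyM]

lemma applyM_vadd (A : Mat p) (u v : Vec p) : applyM A (u + v) = applyM A u + applyM A v := by
  simp [applyM]

lemma dotV_eq (a b : Vec p) : dotV a b = ⟪a, b⟫ := by
  simp [dotV, toFn, EuclideanSpace.inner_eq_star_dotProduct, dotProduct_comm]

lemma quadForm_eq (B : Mat p) (a b : Vec p) : quadForm B a b = ⟪a, applyM B b⟫ := by
  rw [← dotV_eq]; simp [quadForm, dotV, toFn, applyM_ofLp]

lemma inner_symm {A : Mat p} (h : A.IsSymm) (u v : Vec p) :
    ⟪applyM A u, v⟫ = ⟪u, applyM A v⟫ := by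
  rw [← dotV_eq, ← dotV_eq]
  simp only [dotV, toFn, WithLp.equiv_apply, applyM_ofLp]
  rw [dotProduct_mulVec, ← mulVec_transpose, h.eq]

lemma mul_outer (A : Mat p) (a b : Vec p) : A * outer a b = outer (applyM A a) b := by
  simp [outer, toFn, applyM_ofLp, mul_vecMulVec]

lemma outer_mul {A : Mat p} (h : A.IsSymm) (a b : Vec p) :
    outer a b * A = outer a (applyM A b) := by
  simp only [outer, toFn, WithLp.equiv_apply, applyM_ofLp, vecMulVec_mul]
  rw [← mulVec_transpose, h.eq]

def finn (A B : Mat p) : ℝ := ∑ i, ∑ j, A i j * B i j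

lemma frob_sq (A : Mat p) : frobNorm A ^ 2 = finn A A := by
  rw [frobNorm, Real.sq_sqrt (by positivity)]
  simp [finn, sq]

lemma frob_nonneg (A : Mat p) : 0 ≤ frobNorm A := Real.sqrt_nonneg _

lemma finn_add_left (A B C : Mat p) : finn (A + B) C = finn A C + finn B C := by
  simp [finn, add_mul, Finset.sum_add_distrib]
lemma finn_sub_left (A B C : Mat p) : finn (A - B) C = finn A C - finn B C := by
  simp [finn, sub_mul, Finset.sum_sub_distrib]
lemma finn_smul_left (c : ℝ) (A C : Mat p) : finn (c • A) C = c * finn A C := by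
  simp [finn, Finset.mul_sum, mul_assoc]
lemma finn_comm (A B : Mat p) : finn A B = finn B A := by
  simp [finn, mul_comm]
lemma finn_add_right (A B C : Mat p) : finn C (A + B) = finn C A + finn C B := by
  simp [finn, mul_add, Finset.sum_add_distrib]
lemma finn_sub_right (A B C : Mat p) : finn C (A - B) = finn C A - finn C B := by
  simp [finn, mul_sub, Finset.sum_sub_distrib]
lemma finn_smul_right (c : ℝ) (A C : Mat p) : finn C (c • A) = c * finn C A := by
  rw [finn_comm, finn_smul_left, finn_comm]
lemma finn_expand (A B C : Mat p) (c d : ℝ) : finn (A + c • B - d • C) (A + c • B - d • C)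
    = finn A A + c ^ 2 * finn B B + d ^ 2 * finn C C + 2 * c * finn A B - 2 * d * finn A C
      - 2 * c * d * finn B C := by
  simp only [finn_sub_left, finn_add_left, finn_smul_left, finn_sub_right, finn_add_right,
    finn_smul_right]
  rw [finn_comm B A, finn_comm C A, finn_comm C B]; ring
lemma finn_outer (A : Mat p) (a b : Vec p) : finn A (outer a b) = ⟪a, applyM A b⟫ := by
  rw [← quadForm_eq]
  simp only [finn, quadForm, outer, vecMulVec_apply, dotProduct, mulVec, Finset.mul_sum]
  refine Finset.sum_congr rfl fun i _ => Finset.sum_congr rfl fun j _ => ?_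
  ring
lemma applyM_outer (a b v : Vec p) : applyM (outer a b) v = ⟪b, v⟫ • a := by
  ext i
  rw [← dotV_eq]
  simp [applyM_ofLp, outer, toFn, dotV, mulVec, vecMulVec_apply, dotProduct, Finset.sum_mul]
  refine Finset.sum_congr rfl fun j _ => ?_
  ring

open scoped Matrix.Norms.Frobenius in
lemma frob_eq (A : Mat p) : frobNorm A = ‖A‖ := by
  rw [frobenius_norm_def, frobNorm, Real.sqrt_eq_rpow]
  simp

open scoped Matrix.Norms.Frobenius in
lemma frob_add_le (A B : Mat p) : frobNorm (A + B) ≤ frobNorm A + frobNorm B := by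
  simp only [frob_eq]; exact norm_add_le _ _

lemma frob_smul (c : ℝ) (A : Mat p) : frobNorm (c • A) = |c| * frobNorm A := by
  rw [frobNorm, frobNorm, ← Real.sqrt_sq_eq_abs, ← Real.sqrt_mul (sq_nonneg _)]
  simp [Finset.mul_sum, mul_pow]

lemma frob_outer (a b : Vec p) : frobNorm (outer a b) = ‖a‖ * ‖b‖ := by
  have h : frobNorm (outer a b) ^ 2 = (‖a‖ * ‖b‖) ^ 2 := by
    rw [frob_sq, finn_outer, applyM_outer, inner_smul_right, real_inner_self_eq_norm_sq,
      real_inner_self_eq_norm_sq]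
    ring
  exact (pow_left_inj₀ (frob_nonneg _) (by positivity) two_ne_zero).1 h

lemma applyM_le_frob (A : Mat p) (v : Vec p) : ‖applyM A v‖ ≤ frobNorm A * ‖v‖ := by
  rw [EuclideanSpace.norm_eq, EuclideanSpace.norm_eq, frobNorm, ← Real.sqrt_mul (by positivity)]
  apply Real.sqrt_le_sqrt
  rw [Finset.sum_mul]
  refine Finset.sum_le_sum fun i _ => ?_
  simp only [applyM_ofLp, mulVec, dotProduct, Real.norm_eq_abs, sq_abs]
  exact Finset.sum_mul_sq_le_sq_mul_sq _ _ _

lemma applyM_le_op (A : Mat p) (v : Vec p) : ‖applyM A v‖ ≤ opNorm A * ‖v‖ :=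
  ContinuousLinearMap.le_opNorm _ _

lemma scalar_key (F η S β q r b : ℝ) (hη0 : 0 ≤ η) (hη : η ≤ 1/4) (hSp : 0 < S) (hq0 : 0 ≤ q)
    (hqS : q ≤ η ^ 2 * S) (hβq : β ^ 2 ≤ S * q) (hβS : |β| ≤ η * S) (hrq : |r| ≤ η * q)
    (hb : b = S + β) (hbp : 0 < b) :
    F + (S⁻¹)^2 * S^2 + (b⁻¹)^2 * (S + 2*β+q)^2 + 2 * S⁻¹ * β - 2 * b⁻¹ * (β+2*q+r)
        - 2 * S⁻¹ * b⁻¹ * b^2 ≤ F := by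
  have key : β^2 + q^2 - 2*S*q - 2*r*(S+β) ≤ 0 := by
    rw [← hb]
    have hr1 := (abs_le.1 hrq).1
    have hb1 := (abs_le.1 hβS).2
    have e1 : -2 * r * b ≤ 2 * (η * q) * b :=
      mul_le_mul_of_nonneg_right (by linarith) hbp.le
    have e2 : b ≤ 5/4 * S := by
      have : η * S ≤ 1/4 * S := by gcongr
      linarith
    have e3 : η * q ≤ 1/4 * q := by gcongr
    have e4 : 2 * (η * q) * b ≤ 2 * (1/4 * q) * (5/4 * S) := by gcongr
    have e5 : q ≤ 1/16 * S := by
      have : η ^ 2 * S ≤ (1/4)^2 * S := by gcongr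
      linarith
    have e6 : q * q ≤ 1/16 * S * q := by gcongr
    have := mul_nonneg hSp.le hq0
    linarith
  have : (S⁻¹)^2 * S^2 + (b⁻¹)^2 * (S + 2*β+q)^2 + 2 * S⁻¹ * β - 2 * b⁻¹ * (β+2*q+r)
      - 2 * S⁻¹ * b⁻¹ * b^2 = (b⁻¹)^2 * (β^2 + q^2 - 2*S*q - 2*r*(S+β)) := by
    have : β = b - S := by rw [hb]; ring
    rw [this]
    field_simp
    ring
  have := mul_nonneg (sq_nonneg b⁻¹) (neg_nonneg.2 key)
  linarith

/-- exact secant step is nonexpansive near the identity -/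
lemma exact_step (E : Mat p) (hE : E.IsSymm) (hη : frobNorm E ≤ 1/4) (s : Vec p) (hs : s ≠ 0) :
    frobNorm (bfgsUpdate (1 + E) s s - 1) ≤ frobNorm E := by
  set η := frobNorm E with hηd
  have hη0 : 0 ≤ η := frob_nonneg E
  set e := applyM E s with he
  set β : ℝ := ⟪s, e⟫ with hβ
  set q : ℝ := ⟪e, e⟫ with hq
  set r : ℝ := ⟪e, applyM E e⟫ with hr
  set S : ℝ := ⟪s, s⟫ with hS
  have hsp : 0 < ‖s‖ := norm_pos_iff.2 hs
  have hSn : S = ‖s‖ ^ 2 := real_inner_self_eq_norm_sq s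
  have hqn : q = ‖e‖ ^ 2 := real_inner_self_eq_norm_sq e
  have hSp : 0 < S := by rw [hSn]; positivity
  have hen : ‖e‖ ≤ η * ‖s‖ := applyM_le_frob E s
  have hq0 : 0 ≤ q := by rw [hqn]; positivity
  have hqS : q ≤ η ^ 2 * S := by
    rw [hqn, hSn, ← mul_pow]; gcongr
  have hβq : β ^ 2 ≤ S * q := by
    have := abs_real_inner_le_norm s e
    rw [hqn, hSn, ← mul_pow, ← sq_abs]; gcongr
  have hβS : |β| ≤ η * S := by
    have := abs_real_inner_le_norm s e
    calc |β| ≤ ‖s‖ * ‖e‖ := this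
      _ ≤ ‖s‖ * (η * ‖s‖) := by gcongr
      _ = η * S := by rw [hSn]; ring
  have hrq : |r| ≤ η * q := by
    have := abs_real_inner_le_norm e (applyM E e)
    calc |r| ≤ ‖e‖ * ‖applyM E e‖ := this
      _ ≤ ‖e‖ * (η * ‖e‖) := by gcongr; exact applyM_le_frob E e
      _ = η * q := by rw [hqn]; ring
  have hes : ⟪e, s⟫ = β := real_inner_comm _ _
  have hsEe : ⟪s, applyM E e⟫ = q := by rw [← inner_symm hE]
  have hB : (1 + E).IsSymm := by
    simp [IsSymm, transpose_add, hE.eq]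
  have hBs : applyM (1 + E) s = s + e := by rw [applyM_add, applyM_one]
  set b : ℝ := S + β with hb
  have hbb : quadForm (1 + E) s s = b := by
    rw [quadForm_eq, hBs, inner_add_right]
  have hbp : 0 < b := by
    have := (abs_le.1 hβS).1
    nlinarith
  have hEq : bfgsUpdate (1 + E) s s - 1 = E + S⁻¹ • outer s s - b⁻¹ • outer (s + e) (s + e) := by
    rw [bfgsUpdate, hbb, dotV_eq, mul_outer, outer_mul hB, hBs]
    abel
  have hmain : frobNorm (bfgsUpdate (1 + E) s s - 1) ^ 2 ≤ η ^ 2 := by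
    rw [hηd, frob_sq, frob_sq, hEq]
    have h1 : finn (outer s s) (outer s s) = S ^ 2 := by
      rw [finn_outer, applyM_outer, inner_smul_right]; ring
    have h2 : finn (outer s s) (outer (s + e) (s + e)) = b ^ 2 := by
      rw [finn_outer, applyM_outer, inner_smul_right, inner_add_right, inner_add_left, hes]; ring
    have h3 : finn (outer (s + e) (s + e)) (outer (s + e) (s + e)) = (S + 2 * β + q) ^ 2 := by
      rw [finn_outer, applyM_outer, inner_smul_right, inner_add_right, inner_add_left,
        inner_add_left, hes]; ring
    have h4 : finn E (outer s s) = β := by rw [finn_outer]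
    have h5 : finn E (outer (s + e) (s + e)) = β + 2 * q + r := by
      rw [finn_outer, applyM_vadd, inner_add_right, inner_add_left, inner_add_left, hsEe]; ring
    rw [finn_expand, h1, h2, h3, h4, h5]
    exact scalar_key _ η S β q r b hη0 hη hSp hq0 hqS hβq hβS hrq hb hbp
  exact (pow_le_pow_iff_left₀ (frob_nonneg _) hη0 two_ne_zero).1 hmain

lemma pert_step (E : Mat p) (hE : E.IsSymm) (hη : frobNorm E ≤ 1/4) (s y : Vec p) (hs : s ≠ 0)
    (θ : ℝ) (hθ : θ ≤ 1/2) (hy : ‖y - s‖ ≤ θ * ‖s‖) :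
    frobNorm (bfgsUpdate (1 + E) s y - 1) ≤ frobNorm E + 7 * θ := by
  have hsp : 0 < ‖s‖ := norm_pos_iff.2 hs
  have hθ0 : 0 ≤ θ := by
    have := (norm_nonneg _).trans hy
    exact nonneg_of_mul_nonneg_left this hsp
  set d := y - s with hd
  have hyd : y = s + d := by rw [hd]; abel
  set g : ℝ := ⟪d, s⟫ with hg
  have hgb : |g| ≤ θ * ‖s‖ ^ 2 := by
    calc |g| ≤ ‖d‖ * ‖s‖ := abs_real_inner_le_norm _ _
      _ ≤ (θ * ‖s‖) * ‖s‖ := by gcongr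
      _ = _ := by ring
  set w : ℝ := ‖s‖ ^ 2 + g with hw
  have hys : dotV y s = w := by
    rw [dotV_eq, hyd, inner_add_left, real_inner_self_eq_norm_sq]
  have hss : dotV s s = ‖s‖ ^ 2 := by
    rw [dotV_eq, real_inner_self_eq_norm_sq]
  have hs2 : 0 < ‖s‖ ^ 2 := by positivity
  have hw2 : ‖s‖ ^ 2 / 2 ≤ w := by
    have := (abs_le.1 hgb).1
    nlinarith
  have hwp : 0 < w := by linarith
  have houter : outer y y = outer s s + (outer d y + outer s d) := by
    ext i j
    simp [outer, toFn, vecMulVec_apply, hyd]; ring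
  have hEq : bfgsUpdate (1 + E) s y - 1 = (bfgsUpdate (1 + E) s s - 1)
      + (w⁻¹ • (outer d y + outer s d) + (w⁻¹ - (‖s‖^2)⁻¹) • outer s s) := by
    rw [bfgsUpdate, bfgsUpdate, hys, hss, houter, sub_smul, smul_add]
    abel
  have hyn : ‖y‖ ≤ 3/2 * ‖s‖ := by
    rw [hyd]
    refine (norm_add_le _ _).trans ?_
    nlinarith
  have hwi : w⁻¹ ≤ 2 * (‖s‖^2)⁻¹ := by
    rw [← div_eq_mul_inv, le_div_iff₀ hs2, inv_mul_le_iff₀ hwp]; linarith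
  have h1 : frobNorm (w⁻¹ • (outer d y + outer s d)) ≤ 5 * θ := by
    rw [frob_smul, abs_of_pos (inv_pos.2 hwp)]
    have : frobNorm (outer d y + outer s d) ≤ 5/2 * θ * ‖s‖^2 := by
      refine (frob_add_le _ _).trans ?_
      rw [frob_outer, frob_outer]
      have : ‖d‖ * ‖y‖ ≤ (θ * ‖s‖) * (3/2 * ‖s‖) := by gcongr
      have : ‖s‖ * ‖d‖ ≤ ‖s‖ * (θ * ‖s‖) := by gcongr
      nlinarith
    calc _ ≤ (2 * (‖s‖^2)⁻¹) * (5/2 * θ * ‖s‖^2) := by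
          gcongr; exact frob_nonneg _
      _ = _ := by field_simp
  have h2 : frobNorm ((w⁻¹ - (‖s‖^2)⁻¹) • outer s s) ≤ 2 * θ := by
    rw [frob_smul, frob_outer]
    have : w⁻¹ - (‖s‖^2)⁻¹ = - (g * w⁻¹ * (‖s‖^2)⁻¹) := by
      have : g = w - ‖s‖^2 := by rw [hw]; ring
      rw [this]; field_simp; ring
    rw [this, abs_neg, abs_mul, abs_mul, abs_of_pos (inv_pos.2 hwp), abs_of_pos (inv_pos.2 hs2)]
    calc _ ≤ (θ * ‖s‖^2) * (2 * (‖s‖^2)⁻¹) * (‖s‖^2)⁻¹ * (‖s‖ * ‖s‖) := by gcongr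
      _ = _ := by field_simp
  rw [hEq]
  refine (frob_add_le _ _).trans ?_
  have := frob_add_le (w⁻¹ • (outer d y + outer s d)) ((w⁻¹ - (‖s‖^2)⁻¹) • outer s s)
  have := exact_step E hE hη s hs
  linarith

lemma bfgs_conj (M N B : Mat p) (hM : M.IsSymm) (hB : B.IsSymm)
    (hMN : M * N = 1) (s y : Vec p) :
    M * bfgsUpdate B s y * M = bfgsUpdate (M * B * M) (applyM N s) (applyM M y) := by
  have hMNs : applyM M (applyM N s) = s := by rw [← applyM_mul, hMN, applyM_one]
  have hB' : (M * B * M).IsSymm := by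
    simp [IsSymm, transpose_mul, hM.eq, hB.eq, Matrix.mul_assoc]
  have h1 : dotV (applyM M y) (applyM N s) = dotV y s := by
    rw [dotV_eq, inner_symm hM, hMNs, dotV_eq]
  have h3 : applyM (M * B * M) (applyM N s) = applyM M (applyM B s) := by
    rw [applyM_mul, hMNs, applyM_mul]
  have h2 : quadForm (M * B * M) (applyM N s) (applyM N s) = quadForm B s s := by
    rw [quadForm_eq, h3, ← inner_symm hM, hMNs, quadForm_eq]
  rw [bfgsUpdate, bfgsUpdate, h1, h2]
  simp only [mul_outer, outer_mul hB, outer_mul hB', h3, Matrix.mul_sub, Matrix.sub_mul,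
    Matrix.mul_add, Matrix.add_mul, Matrix.mul_smul, Matrix.smul_mul, outer_mul hM]

/-- change-of-variables version of bounded deterioration -/
lemma deter (M N H B : Mat p) (hM : M.IsSymm) (hMN : M * N = 1) (hB : B.IsSymm)
    (hMHM : M * H * M = 1) (a : ℝ) (hMa : opNorm M ≤ a) (s y : Vec p) (hs : s ≠ 0) (κ : ℝ)
    (hκ0 : 0 ≤ κ) (hy : ‖y - applyM H s‖ ≤ κ * ‖s‖) (hκ : a ^ 2 * κ ≤ 1/2)
    (hη : wNorm M (B - H) ≤ 1/4) (hH : H.IsSymm) :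
    wNorm M (bfgsUpdate B s y - H) ≤ wNorm M (B - H) + 7 * (a ^ 2 * κ) := by
  have ha : 0 ≤ a := (norm_nonneg _).trans hMa
  have hE : ∀ C : Mat p, M * (C - H) * M = M * C * M - 1 := by
    intro C; rw [Matrix.mul_sub, Matrix.sub_mul, hMHM]
  have hMH : M * H = N := by
    calc M * H = M * H * (M * N) := by rw [hMN, Matrix.mul_one]
      _ = (M * H * M) * N := by simp only [Matrix.mul_assoc]
      _ = N := by rw [hMHM, Matrix.one_mul]
  have hMNs : applyM M (applyM N s) = s := by rw [← applyM_mul, hMN, applyM_one]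
  have hsN : ‖s‖ ≤ a * ‖applyM N s‖ := by
    calc ‖s‖ = ‖applyM M (applyM N s)‖ := by rw [hMNs]
      _ ≤ opNorm M * ‖applyM N s‖ := applyM_le_op _ _
      _ ≤ _ := by gcongr
  unfold wNorm at *
  rw [hE, bfgs_conj M N B hM hB hMN]
  have h1 : M * B * M = 1 + M * (B - H) * M := by rw [hE]; abel
  rw [h1]
  refine pert_step _ ?_ hη _ _ ?_ _ hκ ?_
  · simp [IsSymm, transpose_mul, hM.eq, hB.eq, hH.eq, Matrix.mul_assoc]
  · intro h; rw [h] at hMNs; apply hs; rw [← hMNs]; simp [applyM]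
  · rw [← hMH, applyM_mul, ← applyM_vsub, ← applyM_mul, hMH]
    calc _ ≤ opNorm M * ‖y - applyM H s‖ := applyM_le_op _ _
      _ ≤ a * (κ * (a * ‖applyM N s‖)) := by
        gcongr
        exact hy.trans (by gcongr)
      _ = _ := by ring

end helpers

section prob
variable {p n : ℕ}

lemma mvt (P : IQNProblem p n) (i : Fin n) (u v : Vec p) (R : ℝ) (hu : ‖u - P.xstar‖ ≤ R)
    (hv : ‖v - P.xstar‖ ≤ R) :
    ‖gradient (P.f i) u - gradient (P.f i) v - applyM (P.Hess i P.xstar) (u - v)‖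
      ≤ P.Ltil * R * ‖u - v‖ := by
  refine Convex.norm_image_sub_le_of_norm_hasFDerivWithin_le' (𝕜 := ℝ)
    (s := Metric.closedBall P.xstar R) (fun x _ => (P.hHess i x).hasFDerivWithinAt) ?_
    (convex_closedBall _ _) ?_ ?_
  · intro x hx
    rw [← map_sub]
    refine (P.hLip i x P.xstar).trans ?_
    have := P.hLtil
    gcongr
    simpa [dist_eq_norm] using hx
  · simpa [dist_eq_norm] using hv
  · simpa [dist_eq_norm] using hu

lemma grad_sum (P : IQNProblem p n) : ∑ i, gradient (P.f i) P.xstar = 0 := by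
  have h := P.hopt
  have hd : ∀ i, HasGradientAt (P.f i) (gradient (P.f i) P.xstar) P.xstar := fun i =>
    ((P.hC2 i).differentiable (by norm_num)).differentiableAt.hasGradientAt
  have h2 : HasGradientAt (fun x => (n : ℝ)⁻¹ * ∑ i, P.f i x)
      ((n : ℝ)⁻¹ • ∑ i, gradient (P.f i) P.xstar) P.xstar := by
    rw [hasGradientAt_iff_hasFDerivAt]
    have h3 := (HasFDerivAt.fun_sum (u := Finset.univ) fun i _ => (hd i).hasFDerivAt).const_mul
      ((n : ℝ)⁻¹)
    rw [map_smulₛₗ, map_sum]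
    exact h3
  rw [h2.gradient] at h
  have hn : (n : ℝ)⁻¹ ≠ 0 := by
    have := P.hn
    positivity
  exact (smul_eq_zero.1 h).resolve_left hn

/-- age weights -/
def wt (n : ℕ) (i : Fin n) (t : ℕ) : ℝ := ((((i : ℕ) : ℤ) - (t : ℤ)) % (n : ℤ) : ℤ)

lemma wt_nonneg (hn : 1 ≤ n) (i : Fin n) (t : ℕ) : 0 ≤ wt n i t := by
  unfold wt
  exact_mod_cast Int.emod_nonneg _ (by omega)

lemma wt_le (hn : 1 ≤ n) (i : Fin n) (t : ℕ) : wt n i t + 1 ≤ n := by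
  unfold wt
  exact_mod_cast Int.emod_lt_of_pos (((i : ℕ) : ℤ) - (t : ℤ)) (by omega : (0:ℤ) < n)

lemma wt_ne (hn : 1 ≤ n) (i : Fin n) (t : ℕ) (h : i ≠ cyc hn t) :
    wt n i (t+1) = wt n i t - 1 := by
  unfold wt
  have hne : (i : ℕ) ≠ t % n := fun h' => h (Fin.ext h')
  have hi := i.2
  have key : (((i : ℕ) : ℤ) - ((t+1 : ℕ) : ℤ)) % (n : ℤ) = (((i : ℕ) : ℤ) - (t : ℤ)) % (n : ℤ) - 1 := by
    have h0 := Int.emod_nonneg (((i : ℕ) : ℤ) - (t : ℤ)) (by omega : (n:ℤ) ≠ 0)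
    have h1 := Int.emod_lt_of_pos (((i : ℕ) : ℤ) - (t : ℤ)) (by omega : (0:ℤ) < n)
    have h2 : (((i : ℕ) : ℤ) - (t : ℤ)) % (n : ℤ) ≠ 0 := by
      intro h3
      have h4 : ((i : ℕ) : ℤ) % n = (t : ℤ) % n :=
        Int.emod_eq_emod_iff_emod_sub_eq_zero.2 h3
      have h5 : (i : ℕ) % n = t % n := by exact_mod_cast h4
      rw [Nat.mod_eq_of_lt hi] at h5
      exact hne h5
    have h6 := Int.emod_add_mul_ediv (((i : ℕ) : ℤ) - (t : ℤ)) n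
    have h7 : (((i : ℕ) : ℤ) - ((t+1 : ℕ) : ℤ)) =
      ((((i : ℕ) : ℤ) - (t : ℤ)) % n - 1) + n * ((((i : ℕ) : ℤ) - (t : ℤ)) / n) := by
      push_cast; linarith
    rw [h7, Int.add_mul_emod_self_left, Int.emod_eq_of_lt (by omega) (by omega)]
  rw [key]; push_cast; ring

lemma wt_cyc (hn : 1 ≤ n) (t : ℕ) : wt n (cyc hn t) t = 0 := by
  unfold wt cyc
  have : ((((t % n : ℕ)) : ℤ) - (t : ℤ)) % (n : ℤ) = 0 := by
    rw [← Int.emod_eq_emod_iff_emod_sub_eq_zero]; simp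
  exact_mod_cast this

/-- residual of the i-th copy -/
def rs {P : IQNProblem p n} (S : IQNState P) (i : Fin n) (t : ℕ) : ℝ := ‖S.z i t - P.xstar‖

def Vt {P : IQNProblem p n} (S : IQNState P) (t : ℕ) : ℝ := ∑ i, (wt n i t + 1) * rs S i t

def Rt {P : IQNProblem p n} (S : IQNState P) (t : ℕ) : ℝ := ∑ i, rs S i t

lemma rs_nonneg {P : IQNProblem p n} (S : IQNState P) (i : Fin n) (t : ℕ) : 0 ≤ rs S i t :=
  norm_nonneg _

lemma Rt_le_Vt {P : IQNProblem p n} (S : IQNState P) (t : ℕ) : Rt S t ≤ Vt S t := by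
  refine Finset.sum_le_sum fun i _ => ?_
  nlinarith [wt_nonneg P.hn i t, rs_nonneg S i t]

lemma Vt_le_Rt {P : IQNProblem p n} (S : IQNState P) (t : ℕ) : Vt S t ≤ n * Rt S t := by
  unfold Vt Rt
  rw [Finset.mul_sum]
  refine Finset.sum_le_sum fun i _ => ?_
  exact mul_le_mul_of_nonneg_right (wt_le P.hn i t) (rs_nonneg S i t)

lemma rs_le_Rt {P : IQNProblem p n} (S : IQNState P) (i : Fin n) (t : ℕ) : rs S i t ≤ Rt S t :=
  Finset.single_le_sum (f := fun i => rs S i t) (fun j _ => rs_nonneg S j t) (Finset.mem_univ i)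

lemma Vt_step {P : IQNProblem p n} (S : IQNState P) (t : ℕ)
    (h : ‖S.x (t+1) - P.xstar‖ ≤ Rt S t / (2 * n)) : Vt S (t+1) ≤ Vt S t - Rt S t / 2 := by
  have hn : (0:ℝ) < n := by exact_mod_cast P.hn
  have hR : n * ‖S.x (t+1) - P.xstar‖ ≤ Rt S t / 2 := by
    calc _ ≤ n * (Rt S t / (2 * n)) := by gcongr
      _ = _ := by field_simp
  have : Vt S (t+1) ≤ ∑ i, ((wt n i t + 1) * rs S i t - rs S i t
      + if i = cyc P.hn t then n * ‖S.x (t+1) - P.xstar‖ else 0) := by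
    refine Finset.sum_le_sum fun i _ => ?_
    by_cases hi : i = cyc P.hn t
    · subst hi
      simp only [if_true]
      rw [wt_cyc, rs, S.hzupd]
      have := mul_le_mul_of_nonneg_right (wt_le P.hn (cyc P.hn t) (t+1))
        (norm_nonneg (S.x (t+1) - P.xstar))
      linarith
    · rw [if_neg hi, wt_ne P.hn i t hi, rs, S.hzfix t i hi, ← rs]
      linarith
  rw [Finset.sum_add_distrib, Finset.sum_sub_distrib] at this
  simp only [Finset.sum_ite_eq', Finset.mem_univ, if_true] at this
  unfold Vt Rt at *
  linarith

/-- the subsequence extraction -/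
lemma subseq (u : ℕ → ℝ) (hpos : ∀ t, 0 < u t) (hu : Tendsto u atTop (nhds 0)) :
    ∃ tk : ℕ → ℕ, StrictMono tk ∧ Tendsto (fun k => u (tk (k+1)) / u (tk k)) atTop (nhds 0) := by
  have hex : ∀ (k t : ℕ), ∃ m, t < m ∧ u m < u t / ((k:ℝ) + 1) := by
    intro k t
    have h1 : ∀ᶠ m in atTop, u m < u t / ((k:ℝ) + 1) :=
      hu.eventually_lt_const (div_pos (hpos t) (by positivity))
    obtain ⟨m, hm⟩ := (h1.and (eventually_gt_atTop t)).exists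
    exact ⟨m, hm.2, hm.1⟩
  choose g hg1 hg2 using hex
  let tk : ℕ → ℕ := fun k => Nat.rec 0 (fun k t => g k t) k
  have hs : ∀ k, tk (k+1) = g k (tk k) := fun k => rfl
  refine ⟨tk, strictMono_nat_of_lt_succ fun k => by rw [hs]; exact hg1 _ _, ?_⟩
  refine squeeze_zero (fun k => (div_pos (hpos _) (hpos _)).le) (fun k => ?_)
    tendsto_one_div_add_atTop_nhds_zero_nat
  rw [div_le_iff₀ (hpos _), hs]
  have := hg2 k (tk k)
  rw [one_div, inv_mul_eq_div]
  exact this.le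

end prob

section main
variable {p n : ℕ}

lemma x_step {P : IQNProblem p n} (M N : Fin n → Mat p) (a η : ℝ) (ha : 1 ≤ a) (hη0 : 0 ≤ η)
    (hMs : ∀ i, (M i).IsSymm) (hNs : ∀ i, (N i).IsSymm) (hMN : ∀ i, M i * N i = 1)
    (hNM : ∀ i, N i * M i = 1)
    (hMHM : ∀ i, M i * P.Hess i P.xstar * M i = 1)
    (hMa : ∀ i, opNorm (M i) ≤ a) (hNa : ∀ i, opNorm (N i) ≤ a)
    (hη : η ≤ 1/2) (S : IQNState P) (t : ℕ)
    (hw : ∀ i, wNorm (M i) (S.B i t - P.Hess i P.xstar) ≤ η)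
    (hV : P.Ltil * Rt S t ≤ η) :
    ‖S.x (t+1) - P.xstar‖ ≤ 4 * a ^ 4 * η * Rt S t := by
  have hn : (0:ℝ) < n := by exact_mod_cast P.hn
  have hn1 : (1:ℝ) ≤ n := by exact_mod_cast P.hn
  have hl := P.hLtil
  set e := S.x (t+1) - P.xstar with he
  set E : Fin n → Mat p := fun i => M i * (S.B i t - P.Hess i P.xstar) * M i with hE
  have hG : ∀ i, S.B i t - P.Hess i P.xstar = N i * E i * N i := by
    intro i
    calc _ = (N i * M i) * (S.B i t - P.Hess i P.xstar) * (M i * N i) := by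
          rw [hNM, hMN, Matrix.one_mul, Matrix.mul_one]
      _ = _ := by simp only [hE, Matrix.mul_assoc]
  have hH : ∀ i, P.Hess i P.xstar = N i * N i := by
    intro i
    calc _ = (N i * M i) * (P.Hess i P.xstar) * (M i * N i) := by
          rw [hNM, hMN, Matrix.one_mul, Matrix.mul_one]
      _ = N i * (M i * P.Hess i P.xstar * M i) * N i := by simp only [Matrix.mul_assoc]
      _ = _ := by rw [hMHM, Matrix.mul_one]
  have hNv : ∀ i (v : Vec p), ‖applyM (N i) v‖ ≤ a * ‖v‖ := fun i v =>
    (applyM_le_op _ _).trans (by gcongr; exact hNa i)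
  have hGn : ∀ i (v : Vec p), ‖applyM (S.B i t - P.Hess i P.xstar) v‖ ≤ a ^ 2 * η * ‖v‖ := by
    intro i v
    rw [hG, applyM_mul, applyM_mul]
    calc _ ≤ a * (η * (a * ‖v‖)) := by
          refine (hNv i _).trans ?_
          gcongr
          refine (applyM_le_frob _ _).trans ?_
          exact mul_le_mul (hw i) (hNv i v) (norm_nonneg _) hη0
      _ = _ := by ring
  -- coercivity
  have hco : ∀ i, ‖e‖ ^ 2 / (2 * a ^ 2) ≤ ⟪e, applyM (S.B i t) e⟫ := by
    intro i
    set v := applyM (N i) e with hv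
    have h1 : applyM (S.B i t) e = applyM (N i) (v + applyM (E i) v) := by
      have : S.B i t = N i * N i + N i * E i * N i := by rw [← hG, ← hH]; abel
      rw [this, applyM_add, applyM_mul, applyM_mul, applyM_mul, applyM_vadd]
    rw [h1, ← inner_symm (hNs i), ← hv, inner_add_right, real_inner_self_eq_norm_sq]
    have h2 : |⟪v, applyM (E i) v⟫| ≤ η * ‖v‖ ^ 2 := by
      calc _ ≤ ‖v‖ * ‖applyM (E i) v‖ := abs_real_inner_le_norm _ _
        _ ≤ ‖v‖ * (η * ‖v‖) := by
          gcongr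
          exact (applyM_le_frob _ _).trans (by gcongr; exact hw i)
        _ = _ := by ring
    have h3 : ‖e‖ ≤ a * ‖v‖ := by
      calc ‖e‖ = ‖applyM (M i) v‖ := by rw [hv, ← applyM_mul, hMN, applyM_one]
        _ ≤ _ := (applyM_le_op _ _).trans (by gcongr; exact hMa i)
    have h4 : ‖e‖ ^ 2 / (2 * a ^ 2) ≤ ‖v‖ ^ 2 / 2 := by
      rw [div_le_iff₀ (by positivity)]
      calc ‖e‖ ^ 2 ≤ (a * ‖v‖) ^ 2 := by gcongr
        _ = _ := by ring
    have h5 := (abs_le.1 h2).1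
    have h6 : η * ‖v‖ ^ 2 ≤ 1/2 * ‖v‖ ^ 2 := by gcongr
    linarith
  -- the equation
  have heq : ∑ i, applyM (S.B i t) e = ∑ i, (applyM (S.B i t) (S.z i t - P.xstar)
      - (gradient (P.f i) (S.z i t) - gradient (P.f i) P.xstar)) := by
    set Bb := (n : ℝ)⁻¹ • ∑ i, S.B i t with hBb
    have h1 : applyM Bb (S.x (t+1)) = (n : ℝ)⁻¹ • ∑ i, applyM (S.B i t) (S.z i t)
        - (n : ℝ)⁻¹ • ∑ i, gradient (P.f i) (S.z i t) := by
      rw [S.hx t, ← applyM_mul, Matrix.mul_nonsing_inv _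
        ((Matrix.isUnit_iff_isUnit_det _).1 (S.hinv t)), applyM_one]
    rw [hBb, applyM_smul, applyM_sum, ← smul_sub] at h1
    have h2 := smul_right_injective (Vec p) (inv_ne_zero hn.ne') h1
    simp only [he, applyM_vsub, Finset.sum_sub_distrib, h2, grad_sum]
    abel
  have hterm : ∀ i, ‖applyM (S.B i t) (S.z i t - P.xstar)
      - (gradient (P.f i) (S.z i t) - gradient (P.f i) P.xstar)‖ ≤ 2 * a ^ 2 * η * rs S i t := by
    intro i
    have h1 := mvt P i (S.z i t) P.xstar (rs S i t) le_rfl (by simpa using rs_nonneg S i t)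
    have h2 := hGn i (S.z i t - P.xstar)
    have h3 : applyM (S.B i t) (S.z i t - P.xstar)
      - (gradient (P.f i) (S.z i t) - gradient (P.f i) P.xstar) =
      applyM (S.B i t - P.Hess i P.xstar) (S.z i t - P.xstar) -
      (gradient (P.f i) (S.z i t) - gradient (P.f i) P.xstar
        - applyM (P.Hess i P.xstar) (S.z i t - P.xstar)) := by
      rw [applyM_sub]; abel
    rw [h3]
    refine (norm_sub_le _ _).trans ((add_le_add h2 h1).trans ?_)
    rw [← rs]
    have h4 : P.Ltil * rs S i t ≤ 1 * η := by
      rw [one_mul]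
      refine le_trans ?_ hV
      gcongr; exact rs_le_Rt S i t
    have h5 : P.Ltil * rs S i t ≤ a ^ 2 * η :=
      h4.trans (mul_le_mul_of_nonneg_right (one_le_pow₀ ha) hη0)
    have h6 := mul_le_mul_of_nonneg_right h5 (rs_nonneg S i t)
    linarith
  have hlow : ‖e‖ ^ 2 / (2 * a ^ 2) ≤ ⟪e, ∑ i, applyM (S.B i t) e⟫ := by
    rw [inner_sum]
    calc _ ≤ (n : ℝ) * (‖e‖ ^ 2 / (2 * a ^ 2)) := le_mul_of_one_le_left (by positivity) hn1
      _ = ∑ i : Fin n, ‖e‖ ^ 2 / (2 * a ^ 2) := by simp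
      _ ≤ _ := Finset.sum_le_sum fun i _ => hco i
  have hupp : ⟪e, ∑ i, applyM (S.B i t) e⟫ ≤ ‖e‖ * (2 * a ^ 2 * η * Rt S t) := by
    rw [heq]
    refine (real_inner_le_norm _ _).trans ?_
    gcongr
    refine (norm_sum_le _ _).trans ?_
    rw [Rt, Finset.mul_sum]
    exact Finset.sum_le_sum fun i _ => hterm i
  rcases (norm_nonneg e).eq_or_lt with h0 | h0
  · rw [← h0]
    have : 0 ≤ Rt S t := Finset.sum_nonneg fun i _ => rs_nonneg S i t
    positivity
  · have h1 := hlow.trans hupp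
    rw [div_le_iff₀ (by positivity)] at h1
    have h2 : ‖e‖ * ‖e‖ ≤ ‖e‖ * (4 * a ^ 4 * η * Rt S t) := by
      calc _ = ‖e‖ ^ 2 := by ring
        _ ≤ _ := h1
        _ = _ := by ring
    exact le_of_mul_le_mul_left h2 h0

lemma inv_step {P : IQNProblem p n} (M N : Fin n → Mat p) (a η K : ℝ) (ha : 1 ≤ a)
    (hη0 : 0 ≤ η)
    (hMs : ∀ i, (M i).IsSymm) (hNs : ∀ i, (N i).IsSymm) (hMN : ∀ i, M i * N i = 1)
    (hNM : ∀ i, N i * M i = 1) (hHs : ∀ i, (P.Hess i P.xstar).IsSymm)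
    (hMHM : ∀ i, M i * P.Hess i P.xstar * M i = 1)
    (hMa : ∀ i, opNorm (M i) ≤ a) (hNa : ∀ i, opNorm (N i) ≤ a)
    (hη : η ≤ 1/4) (hηn : 4 * a ^ 4 * η = 1 / (2 * n)) (hK : K = 28 * a ^ 2 * P.Ltil)
    (S : IQNState P) (t : ℕ)
    (hw : ∀ i, wNorm (M i) (S.B i t - P.Hess i P.xstar) + K * Vt S t ≤ η) :
    ‖S.x (t+1) - P.xstar‖ ≤ Rt S t / (2 * n) ∧
    (∀ i, wNorm (M i) (S.B i (t+1) - P.Hess i P.xstar) + K * Vt S (t+1) ≤ η) := by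
  have hn : (0:ℝ) < n := by exact_mod_cast P.hn
  have hn1 : (1:ℝ) ≤ n := by exact_mod_cast P.hn
  have hl := P.hLtil
  have hR0 : 0 ≤ Rt S t := Finset.sum_nonneg fun i _ => rs_nonneg S i t
  have hRV := Rt_le_Vt S t
  have hV0 : 0 ≤ Vt S t := hR0.trans hRV
  have hK0 : 0 ≤ K := by rw [hK]; positivity
  have hKV : K * Vt S t ≤ η :=
    (le_add_of_nonneg_left (frob_nonneg _)).trans (hw (cyc P.hn t))
  have hKR : K * Rt S t ≤ η := (mul_le_mul_of_nonneg_left hRV hK0).trans hKV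
  have hw' : ∀ i, wNorm (M i) (S.B i t - P.Hess i P.xstar) ≤ η := fun i =>
    (le_add_of_nonneg_right (mul_nonneg hK0 hV0)).trans (hw i)
  have ha2 : 1 ≤ a ^ 2 := one_le_pow₀ ha
  have hlK : P.Ltil ≤ K := by rw [hK]; nlinarith
  have hx := x_step M N a η ha hη0 hMs hNs hMN hNM hMHM hMa hNa (by linarith) S t hw'
    ((mul_le_mul_of_nonneg_right hlK hR0).trans hKR)
  rw [hηn] at hx
  have hx' : ‖S.x (t+1) - P.xstar‖ ≤ Rt S t / (2 * n) := by
    rw [div_mul_eq_mul_div, one_mul] at hx; exact hx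
  refine ⟨hx', ?_⟩
  have hVs := Vt_step S t hx'
  have hKVs : K * Vt S (t+1) ≤ K * Vt S t - K * Rt S t / 2 := by
    have := mul_le_mul_of_nonneg_left hVs hK0
    linarith
  intro i
  by_cases hi : i = cyc P.hn t
  · subst hi
    set i := cyc P.hn t with hi
    have hxR : ‖S.x (t+1) - P.xstar‖ ≤ 1 * Rt S t := by
      refine hx'.trans ?_
      rw [div_le_iff₀ (by positivity)]
      nlinarith
    rw [one_mul] at hxR
    have hzn : ‖S.z i (t+1) - P.xstar‖ ≤ Rt S t := by rw [hi, S.hzupd]; exact hxR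
    have hm := mvt P i (S.z i (t+1)) (S.z i t) (Rt S t) hzn (rs_le_Rt S i t)
    have hsm : a ^ 2 * (P.Ltil * Rt S t) ≤ 1/2 := by
      rw [hK] at hKR
      nlinarith [mul_nonneg (mul_nonneg (sq_nonneg a) hl.le) hR0]
    have hd := deter (M i) (N i) (P.Hess i P.xstar) (S.B i t) (hMs i) (hMN i) (S.hsym i t)
      (hMHM i) a (hMa i) _ _ (S.hs t) (P.Ltil * Rt S t) (by positivity) hm hsm
      ((hw' i).trans hη) (hHs i)
    have hB := S.hBupd t
    rw [← hi] at hB hd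
    rw [hB]
    have h7 : 7 * (a ^ 2 * (P.Ltil * Rt S t)) = K * Rt S t / 4 := by rw [hK]; ring
    have := hw i
    have : 0 ≤ K * Rt S t := mul_nonneg hK0 hR0
    linarith
  · rw [S.hBfix t i hi]
    have := hw i
    have : 0 ≤ K * Rt S t := mul_nonneg hK0 hR0
    linarith

lemma exists_bd (M N : Fin n → Mat p) : ∃ a : ℝ, 1 ≤ a ∧ (∀ i, opNorm (M i) ≤ a) ∧
    ∀ i, opNorm (N i) ≤ a := by
  have h0 : ∀ A : Mat p, 0 ≤ opNorm A := fun A => norm_nonneg _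
  have hs : ∀ A : Fin n → Mat p, 0 ≤ ∑ i, opNorm (A i) := fun A =>
    Finset.sum_nonneg fun i _ => h0 _
  have h1 : ∀ (A : Fin n → Mat p) i, opNorm (A i) ≤ ∑ i, opNorm (A i) := fun A i =>
    Finset.single_le_sum (f := fun i => opNorm (A i)) (fun j _ => h0 _) (Finset.mem_univ i)
  refine ⟨1 + ∑ i, opNorm (M i) + ∑ i, opNorm (N i), ?_, fun i => ?_, fun i => ?_⟩
  · linarith [hs M, hs N]
  · linarith [hs M, hs N, h1 M i]
  · linarith [hs M, hs N, h1 N i]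

end main

/-- first part of Theorem 2 of the paper: locally, some subsequence of
the residuals `‖x^t − x*‖` converges to zero superlinearly. -/
theorem stmt9 {p n : ℕ} (P : IQNProblem p n) (M : Fin n → Mat p)
    (hM : ∀ i, (M i).PosDef ∧ M i * P.Hess i P.xstar * M i = 1) :
    ∃ ε > (0:ℝ), ∃ δ > (0:ℝ), ∀ S : IQNState P,
      (∀ t, S.x t ≠ P.xstar) →
      ‖S.x 0 - P.xstar‖ < ε →
      (∀ i, wNorm (M i) (S.B i 0 - P.Hess i P.xstar) < δ) →
      ∃ tk : ℕ → ℕ, StrictMono tk ∧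
        Tendsto (fun k : ℕ =>
            ‖S.x (tk (k+1)) - P.xstar‖ / ‖S.x (tk k) - P.xstar‖)
          atTop (nhds 0) := by
  have hn : (0:ℝ) < n := by exact_mod_cast P.hn
  have hn1 : (1:ℝ) ≤ n := by exact_mod_cast P.hn
  have hl := P.hLtil
  have hdet : ∀ i, IsUnit (M i).det := fun i => (hM i).1.det_pos.ne'.isUnit
  set N : Fin n → Mat p := fun i => (M i)⁻¹ with hN
  have hMN : ∀ i, M i * N i = 1 := fun i => Matrix.mul_nonsing_inv _ (hdet i)
  have hNM : ∀ i, N i * M i = 1 := fun i => Matrix.nonsing_inv_mul _ (hdet i)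
  have hMs : ∀ i, (M i).IsSymm := fun i => by
    have := (hM i).1.isHermitian.eq
    simpa [IsSymm] using this
  have hNs : ∀ i, (N i).IsSymm := fun i => by
    rw [IsSymm, hN, Matrix.transpose_nonsing_inv, (hMs i).eq]
  have hH : ∀ i, P.Hess i P.xstar = N i * N i := by
    intro i
    calc _ = (N i * M i) * (P.Hess i P.xstar) * (M i * N i) := by
          rw [hNM, hMN, Matrix.one_mul, Matrix.mul_one]
      _ = N i * (M i * P.Hess i P.xstar * M i) * N i := by simp only [Matrix.mul_assoc]
      _ = _ := by rw [(hM i).2, Matrix.mul_one]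
  have hHs : ∀ i, (P.Hess i P.xstar).IsSymm := fun i => by
    rw [hH, IsSymm, Matrix.transpose_mul, (hNs i).eq]
  obtain ⟨a, ha, hMa, hNa⟩ := exists_bd M N
  have ha4 : 1 ≤ a ^ 4 := one_le_pow₀ ha
  set η : ℝ := 1 / (8 * n * a ^ 4) with hη
  have hηp : 0 < η := by positivity
  have hη4 : η ≤ 1/4 := by
    rw [hη, div_le_div_iff₀ (by positivity) (by norm_num)]
    nlinarith
  have hηn : 4 * a ^ 4 * η = 1 / (2 * n) := by
    rw [hη]; field_simp; norm_num
  set K : ℝ := 28 * a ^ 2 * P.Ltil with hK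
  have hKp : 0 < K := by positivity
  refine ⟨η / (2 * K * n ^ 2), by positivity, η / 2, by positivity, ?_⟩
  intro S hne hx0 hB0
  have hV0 : K * Vt S 0 ≤ η / 2 := by
    have h1 : Rt S 0 ≤ n * (η / (2 * K * n ^ 2)) := by
      calc Rt S 0 ≤ ∑ i : Fin n, (η / (2 * K * n ^ 2)) := by
            refine Finset.sum_le_sum fun i _ => ?_
            rw [rs, S.hz0]; exact hx0.le
        _ = _ := by simp
    calc K * Vt S 0 ≤ K * (n * (n * (η / (2 * K * n ^ 2)))) := by
          gcongr
          exact (Vt_le_Rt S 0).trans (by gcongr)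
      _ = _ := by field_simp
  have hinv : ∀ t, ∀ i, wNorm (M i) (S.B i t - P.Hess i P.xstar) + K * Vt S t ≤ η := by
    intro t
    induction t with
    | zero => intro i; linarith [hB0 i]
    | succ t ih =>
      exact (inv_step M N a η K ha hηp.le hMs hNs hMN hNM hHs (fun i => (hM i).2) hMa hNa hη4 hηn
        hK S t ih).2
  have hx : ∀ t, ‖S.x (t+1) - P.xstar‖ ≤ Rt S t / (2 * n) := fun t =>
    (inv_step M N a η K ha hηp.le hMs hNs hMN hNM hHs (fun i => (hM i).2) hMa hNa hη4 hηn
        hK S t (hinv t)).1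
  have hR0 : ∀ t, 0 ≤ Rt S t := fun t => Finset.sum_nonneg fun i _ => rs_nonneg S i t
  have hV0' : ∀ t, 0 ≤ Vt S t := fun t => (hR0 t).trans (Rt_le_Vt S t)
  set ρ : ℝ := 1 - 1 / (2 * n) with hρ
  have hρ1 : ρ < 1 := by
    have : 0 < 1 / (2 * (n:ℝ)) := by positivity
    linarith
  have hρ0 : 0 ≤ ρ := by
    have : 1 / (2 * (n:ℝ)) ≤ 1 := by
      rw [div_le_one (by positivity)]; linarith
    linarith
  have hVd : ∀ t, Vt S (t+1) ≤ ρ * Vt S t := by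
    intro t
    have h1 := Vt_step S t (hx t)
    have h2 : Vt S t / (2 * n) ≤ Rt S t / 2 := by
      rw [div_le_div_iff₀ (by positivity) (by norm_num)]
      linarith [Vt_le_Rt S t]
    rw [hρ, sub_mul, one_mul, div_mul_eq_mul_div, one_mul]
    linarith
  have hVg : ∀ t, Vt S t ≤ ρ ^ t * Vt S 0 := by
    intro t
    induction t with
    | zero => simp
    | succ t ih =>
      calc _ ≤ ρ * Vt S t := hVd t
        _ ≤ ρ * (ρ ^ t * Vt S 0) := by gcongr
        _ = _ := by ring
  have hlim : Tendsto (fun t => ‖S.x t - P.xstar‖) atTop (nhds 0) := by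
    rw [← tendsto_add_atTop_iff_nat 1]
    refine squeeze_zero (fun t => norm_nonneg _) (g := fun t => ρ ^ t * Vt S 0) (fun t => ?_) ?_
    · refine (hx t).trans (le_trans ?_ ((Rt_le_Vt S t).trans (hVg t)))
      exact div_le_self (hR0 t) (by linarith)
    · simpa using (tendsto_pow_atTop_nhds_zero_of_lt_one hρ0 hρ1).mul_const (Vt S 0)
  exact subseq _ (fun t => norm_pos_iff.2 (sub_ne_zero.2 (hne t))) hlim

end
end

section
/- Let (a_t)_{t≥0}, (σ_t)_{t≥0}, and (θ_t)_{t≥0} be sequences of nonnegative real numbers and let α, α₃, α₄ be positive constants such that Σ_{t=0}^∞ σ_t < ∞ and, for all t, α θ_t² a_t ≤ a_t − a_{t+1} + σ_t(α₃ a_t + α₄). Then Σ_{t=0}^∞ θ_t² a_t < ∞. -/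
open Filter

/-- if `α θ_t² a_t ≤ a_t − a_{t+1} + σ_t(α₃ a_t + α₄)` with nonnegative
sequences, positive constants and `Σ σ_t < ∞`, then `Σ θ_t² a_t < ∞`. -/
theorem stmt12 (a σ θ : ℕ → ℝ) (ha : ∀ t, 0 ≤ a t) (hσ : ∀ t, 0 ≤ σ t)
    (hθ : ∀ t, 0 ≤ θ t) (α α₃ α₄ : ℝ) (hα : 0 < α) (hα₃ : 0 < α₃) (hα₄ : 0 < α₄)
    (hsum : Summable σ)
    (hrec : ∀ t, α * θ t ^ 2 * a t ≤ a t - a (t+1) + σ t * (α₃ * a t + α₄)) :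
    Summable (fun t => θ t ^ 2 * a t) := by
  have hb : ∀ n, α₃ * a n + α₄ ≤
      (α₃ * a 0 + α₄) * Real.exp (α₃ * ∑ i ∈ Finset.range n, σ i) := by
    intro n
    induction n with
    | zero => simp
    | succ n ih =>
      have hpos : 0 ≤ α * θ n ^ 2 * a n :=
        mul_nonneg (mul_nonneg hα.le (sq_nonneg _)) (ha n)
      have h1 : a (n+1) ≤ a n + σ n * (α₃ * a n + α₄) := by linarith [hrec n]
      have h2 := mul_le_mul_of_nonneg_left h1 hα₃.le
      have hbn : 0 ≤ α₃ * a n + α₄ := add_nonneg (mul_nonneg hα₃.le (ha n)) hα₄.le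
      have h3 : α₃ * σ n + 1 ≤ Real.exp (α₃ * σ n) := Real.add_one_le_exp _
      have h4 := mul_le_mul_of_nonneg_left h3 hbn
      have h5 := mul_le_mul_of_nonneg_right ih (Real.exp_pos (α₃ * σ n)).le
      rw [Finset.sum_range_succ, mul_add, Real.exp_add, ← mul_assoc]
      linarith
  have hs : ∀ n, ∑ i ∈ Finset.range n, σ i ≤ ∑' i, σ i :=
    fun n => hsum.sum_le_tsum _ (fun i _ => hσ i)
  have hb0 : 0 ≤ α₃ * a 0 + α₄ := add_nonneg (mul_nonneg hα₃.le (ha 0)) hα₄.le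
  obtain ⟨B, hB0, hB⟩ : ∃ B : ℝ, 0 ≤ B ∧ ∀ n, α₃ * a n + α₄ ≤ B := by
    refine ⟨(α₃ * a 0 + α₄) * Real.exp (α₃ * ∑' i, σ i),
      mul_nonneg hb0 (Real.exp_pos _).le, fun n => (hb n).trans ?_⟩
    exact mul_le_mul_of_nonneg_left
      (Real.exp_le_exp.mpr (mul_le_mul_of_nonneg_left (hs n) hα₃.le)) hb0
  have hp : ∀ n, α * ∑ i ∈ Finset.range n, θ i ^ 2 * a i ≤
      a 0 - a n + B * ∑ i ∈ Finset.range n, σ i := by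
    intro n
    induction n with
    | zero => simp
    | succ n ih =>
      rw [Finset.sum_range_succ, Finset.sum_range_succ, mul_add, mul_add]
      have h1 := mul_le_mul_of_nonneg_left (hB n) (hσ n)
      have h2 := hrec n
      rw [mul_assoc] at h2
      linarith
  refine summable_of_sum_range_le (c := (a 0 + B * ∑' i, σ i) / α)
    (fun i => mul_nonneg (sq_nonneg _) (ha i)) (fun n => ?_)
  rw [le_div_iff₀ hα]
  have h1 := mul_le_mul_of_nonneg_left (hs n) hB0
  linarith [hp n, ha n]
end

section
/- Let n ≥ 1 be an integer and let (e_t)_{t≥0} be a sequence of strictly positive reals such that lim_{t→∞} e_t / max{e_{t−1}, e_{t−2}, …, e_{t−n}} = 0. For k ≥ 0 define the per-pass maximum M_k = max{e_u : kn ≤ u ≤ kn + n − 1}. Then lim_{k→∞} M_{k+1}/M_k = 0. -/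
open Filter

/-- if `e_t / max{e_{t−1}, …, e_{t−n}} → 0` (over `t ≥ n`), then the
per-pass maxima `M_k = max{e_u : kn ≤ u ≤ kn + n − 1}` satisfy `M_{k+1}/M_k → 0`. -/
theorem stmt18 (n : ℕ) (hn : 1 ≤ n) (e : ℕ → ℝ) (he : ∀ t, 0 < e t)
    (hne : (Finset.range n).Nonempty)
    (hlim : Tendsto (fun t : ℕ =>
        e (t + n) / (Finset.range n).sup' hne (fun j => e (t + n - 1 - j)))
      atTop (nhds 0)) :
    Tendsto (fun k : ℕ =>
        ((Finset.range n).sup' hne (fun u => e ((k + 1) * n + u))) /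
          ((Finset.range n).sup' hne (fun u => e (k * n + u))))
      atTop (nhds 0) := by
  have hpos : ∀ k : ℕ, 0 < (Finset.range n).sup' hne (fun u => e (k * n + u)) := by
    intro k
    rw [Finset.lt_sup'_iff]
    exact ⟨0, Finset.mem_range.2 hn, he _⟩
  rw [Metric.tendsto_atTop] at hlim ⊢
  intro ε hε
  have hδ : 0 < min (ε / 2) 1 := by positivity
  obtain ⟨T, hT⟩ := hlim _ hδ
  refine ⟨T, fun k hk => ?_⟩
  set M := (Finset.range n).sup' hne (fun u => e (k * n + u)) with hM
  have hMp : 0 < M := hpos k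
  have hδ1 : min (ε / 2) 1 ≤ 1 := min_le_right _ _
  have hδ2 : min (ε / 2) 1 ≤ ε / 2 := min_le_left _ _
  set δ := min (ε / 2) 1 with hδd
  have key : ∀ u, u < n → e ((k + 1) * n + u) ≤ δ * M := by
    intro u
    induction u using Nat.strong_induction_on with
    | _ u ih =>
      intro hu
      have hTk : k * n + u ≥ T := by nlinarith
      have h := hT (k * n + u) hTk
      have hS : (Finset.range n).sup' hne (fun j => e (k * n + u + n - 1 - j)) ≤ M := by
        apply Finset.sup'_le
        intro j hj
        have hj := Finset.mem_range.1 hj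
        by_cases hc : u + n - 1 - j < n
        · have : k * n + u + n - 1 - j = k * n + (u + n - 1 - j) := by omega
          rw [this]
          exact Finset.le_sup' (fun u => e (k * n + u)) (Finset.mem_range.2 hc)
        · have : k * n + u + n - 1 - j = (k + 1) * n + (u - 1 - j) := by
            rw [add_mul]; omega
          rw [this]
          have h2 := ih (u - 1 - j) (by omega) (by omega)
          nlinarith
      have hSp : 0 < (Finset.range n).sup' hne (fun j => e (k * n + u + n - 1 - j)) := by
        rw [Finset.lt_sup'_iff]
        exact ⟨0, Finset.mem_range.2 hn, he _⟩
      rw [Real.dist_eq, sub_zero] at h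
      have h3 := (div_lt_iff₀ hSp).1 (lt_of_abs_lt h)
      have h4 : (k + 1) * n + u = k * n + u + n := by ring
      rw [h4]
      exact h3.le.trans (mul_le_mul_of_nonneg_left hS hδ.le)
  have hle : (Finset.range n).sup' hne (fun u => e ((k + 1) * n + u)) ≤ δ * M :=
    Finset.sup'_le _ _ fun u hu => key u (Finset.mem_range.1 hu)
  rw [Real.dist_eq, sub_zero, abs_of_pos (div_pos (hpos (k + 1)) hMp), div_lt_iff₀ hMp]
  nlinarith
end
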